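/- arXiv:1804.02585 — 5 statements merged into one kernel-verified Lean document; each statement's English description precedes it below -/
import Mathlib

section
/- Let Γ^a_{bc} be a torsion-free affine connection on an open set U ⊆ ℝⁿ, let σ^{ab} be a symmetric C¹ tensor field satisfying the metrisability equations ∇_a σ^{bc} = δ^b_a μ^c + δ^c_a μ^b for some vector field μ, and let ω be a nowhere-vanishing C¹ 1-form on U with σ^{ab}ω_b = 0 pointwise. Then for all indices a, b, c, d: ω_d·∇_c σ^{ab} = −(δ^a_c σ^{be} + δ^b_c σ^{ae})·∇_d ω_e (summation over e). In particular, all first partial derivatives of a degenerate solution σ are determined algebraically by σ and the covariant derivative of ω. -/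
/-- Partial derivative `∂_i f` on `ℝⁿ` (points as `Fin n → ℝ`). -/
noncomputable def pdv {n : ℕ} (i : Fin n) (f : (Fin n → ℝ) → ℝ) (x : Fin n → ℝ) : ℝ :=
  fderiv ℝ f x (Pi.single i 1)

/-- Covariant derivative `∇_a σ^{bc}` of a `(2,0)`-tensor. -/
noncomputable def covUp {n : ℕ} (Γ : Fin n → Fin n → Fin n → (Fin n → ℝ) → ℝ)
    (σ : Fin n → Fin n → (Fin n → ℝ) → ℝ) (a b c : Fin n) (x : Fin n → ℝ) : ℝ :=
  pdv a (σ b c) x + ∑ d, Γ b a d x * σ d c x + ∑ d, Γ c a d x * σ b d x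

/-- Covariant derivative `∇_a ω_b` of a 1-form. -/
noncomputable def covForm {n : ℕ} (Γ : Fin n → Fin n → Fin n → (Fin n → ℝ) → ℝ)
    (ω : Fin n → (Fin n → ℝ) → ℝ) (a b : Fin n) (x : Fin n → ℝ) : ℝ :=
  pdv a (ω b) x - ∑ c, Γ c a b x * ω c x

theorem degen_leibniz
    (n : ℕ) (U : Set (Fin n → ℝ)) (hU : IsOpen U)
    (Γ : Fin n → Fin n → Fin n → (Fin n → ℝ) → ℝ)
    (σ : Fin n → Fin n → (Fin n → ℝ) → ℝ)
    (hσC1 : ∀ a b, ContDiffOn ℝ 1 (σ a b) U)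
    (ω : Fin n → (Fin n → ℝ) → ℝ)
    (hωC1 : ∀ a, ContDiffOn ℝ 1 (ω a) U)
    (hker : ∀ a : Fin n, ∀ x ∈ U, ∑ b, σ a b x * ω b x = 0)
    (a b : Fin n) (x : Fin n → ℝ) (hx : x ∈ U) :
    ∑ c, covUp Γ σ a b c x * ω c x + ∑ c, σ b c x * covForm Γ ω a c x = 0 := by
  have hnx : U ∈ nhds x := hU.mem_nhds hx
  have hσd : ∀ c, DifferentiableAt ℝ (σ b c) x := fun c =>
    ((hσC1 b c).contDiffAt hnx).differentiableAt (by norm_num)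
  have hωd : ∀ c, DifferentiableAt ℝ (ω c) x := fun c =>
    ((hωC1 c).contDiffAt hnx).differentiableAt (by norm_num)
  have h1 : HasFDerivAt (fun y => ∑ c, σ b c y * ω c y)
      (∑ c, (σ b c x • fderiv ℝ (ω c) x + ω c x • fderiv ℝ (σ b c) x)) x :=
    HasFDerivAt.fun_sum fun c _ => (hσd c).hasFDerivAt.mul (hωd c).hasFDerivAt
  have h2 : HasFDerivAt (fun y => ∑ c, σ b c y * ω c y) (0 : (Fin n → ℝ) →L[ℝ] ℝ) x := by
    refine (hasFDerivAt_const (0 : ℝ) x).congr_of_eventuallyEq ?_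
    filter_upwards [hnx] with y hy using hker b y hy
  have h3 := congrArg (fun L : (Fin n → ℝ) →L[ℝ] ℝ => L (Pi.single a 1)) (h1.unique h2)
  have h4 : ∑ c, (σ b c x * pdv a (ω c) x + ω c x * pdv a (σ b c) x) = 0 := by
    simpa [pdv] using h3
  have h5 : ∑ c, (∑ d, Γ b a d x * σ d c x) * ω c x = 0 := by
    simp_rw [Finset.sum_mul]
    rw [Finset.sum_comm]
    refine Finset.sum_eq_zero fun d _ => ?_
    simp_rw [mul_assoc]
    rw [← Finset.mul_sum, hker d x hx, mul_zero]
  have h6 : ∑ c, (∑ d, Γ c a d x * σ b d x) * ω c x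
      = ∑ c, σ b c x * ∑ d, Γ d a c x * ω d x := by
    simp_rw [Finset.sum_mul, Finset.mul_sum]
    rw [Finset.sum_comm]
    refine Finset.sum_congr rfl fun d _ => Finset.sum_congr rfl fun c _ => ?_
    ring
  rw [Finset.sum_add_distrib] at h4
  have h7 : ∑ c, pdv a (σ b c) x * ω c x = ∑ c, ω c x * pdv a (σ b c) x :=
    Finset.sum_congr rfl fun c _ => mul_comm _ _
  simp only [covUp, covForm, add_mul, mul_sub, Finset.sum_add_distrib, Finset.sum_sub_distrib]
  linarith

/-- For a degenerate solution `σ` of the metrisability equations with kernel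
containing the nowhere-vanishing 1-form `ω`, all first derivatives of `σ` are
determined algebraically: `ω_d ∇_c σ^{ab} = −(δ^a_c σ^{be} + δ^b_c σ^{ae}) ∇_d ω_e`. -/
theorem degenerate_solution_derivatives_determined
    (n : ℕ) (U : Set (Fin n → ℝ)) (hU : IsOpen U)
    (Γ : Fin n → Fin n → Fin n → (Fin n → ℝ) → ℝ)
    (hΓsym : ∀ a b c x, Γ a b c x = Γ a c b x)
    (hΓC1 : ∀ a b c, ContDiffOn ℝ 1 (Γ a b c) U)
    (σ : Fin n → Fin n → (Fin n → ℝ) → ℝ)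
    (hσsym : ∀ a b x, σ a b x = σ b a x)
    (hσC1 : ∀ a b, ContDiffOn ℝ 1 (σ a b) U)
    (μ : Fin n → (Fin n → ℝ) → ℝ)
    (hmet : ∀ a b c : Fin n, ∀ x ∈ U,
      covUp Γ σ a b c x
        = (if b = a then μ c x else 0) + (if c = a then μ b x else 0))
    (ω : Fin n → (Fin n → ℝ) → ℝ)
    (hωC1 : ∀ a, ContDiffOn ℝ 1 (ω a) U)
    (hω0 : ∀ x ∈ U, ∃ a, ω a x ≠ 0)
    (hker : ∀ a : Fin n, ∀ x ∈ U, ∑ b, σ a b x * ω b x = 0) :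
    ∀ a b c d : Fin n, ∀ x ∈ U,
      ω d x * covUp Γ σ c a b x
        = -((if a = c then (1 : ℝ) else 0) * (∑ e, σ b e x * covForm Γ ω d e x)
            + (if b = c then (1 : ℝ) else 0) * (∑ e, σ a e x * covForm Γ ω d e x)) := by
  intro a b c d x hx
  have key : ∀ a b : Fin n, (if b = a then ∑ c, μ c x * ω c x else 0) + μ b x * ω a x
      + ∑ c, σ b c x * covForm Γ ω a c x = 0 := by
    intro a b
    have h := degen_leibniz n U hU Γ σ hσC1 ω hωC1 hker a b x hx
    have h' : ∑ c, covUp Γ σ a b c x * ω c x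
        = (if b = a then ∑ c, μ c x * ω c x else 0) + μ b x * ω a x := by
      simp_rw [hmet _ _ _ x hx, add_mul, Finset.sum_add_distrib]
      congr 1
      · split_ifs <;> simp
      · simp
    rw [h'] at h
    exact h
  have hμ : ∑ c, μ c x * ω c x = 0 := by
    obtain ⟨a, ha⟩ := hω0 x hx
    have h0 : ∑ b, ω b x * ((if b = a then ∑ c, μ c x * ω c x else 0) + μ b x * ω a x
      + ∑ c, σ b c x * covForm Γ ω a c x) = 0 :=
      Finset.sum_eq_zero fun b _ => by rw [key a b, mul_zero]
    have h1 : ∑ b, ω b x * ∑ c, σ b c x * covForm Γ ω a c x = 0 := by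
      simp_rw [Finset.mul_sum]
      rw [Finset.sum_comm]
      refine Finset.sum_eq_zero fun c _ => ?_
      have : ∑ b, ω b x * (σ b c x * covForm Γ ω a c x)
          = (∑ b, σ c b x * ω b x) * covForm Γ ω a c x := by
        rw [Finset.sum_mul]
        refine Finset.sum_congr rfl fun b _ => ?_
        rw [hσsym b c]
        ring
      rw [this, hker c x hx, zero_mul]
    have h2 : ∑ b, ω b x * (μ b x * ω a x) = ω a x * ∑ c, μ c x * ω c x := by
      rw [Finset.mul_sum]
      exact Finset.sum_congr rfl fun b _ => by ring
    have h3 : ∑ b, ω b x * (if b = a then ∑ c, μ c x * ω c x else 0)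
        = ω a x * ∑ c, μ c x * ω c x := by
      simp
    simp_rw [mul_add, Finset.sum_add_distrib] at h0
    rw [h1, h2, h3] at h0
    have h4 : ω a x * ∑ c, μ c x * ω c x = 0 := by linarith
    exact (mul_eq_zero.mp h4).resolve_left ha
  have key2 : ∀ b, ∑ e, σ b e x * covForm Γ ω d e x = -(μ b x * ω d x) := by
    intro b
    have h := key d b
    rw [hμ, ite_self] at h
    linarith
  rw [key2, key2, hmet _ _ _ x hx]
  split_ifs <;> ring
end

section
/- Let Γ^a_{bc} be a torsion-free affine connection on an open set U ⊆ ℝⁿ and let σ^{ab} be a symmetric C¹ tensor field satisfying the metrisability equations ∇_a σ^{bc} = δ^b_a μ^c + δ^c_a μ^b for some vector field μ. Fix 1 ≤ k < n and suppose that σ^{ab} = 0 whenever a > k or b > k, and that the k×k block (σ^{ij})_{i,j ≤ k} is invertible at every point of U. Then Γ^α_{ij} = 0 on U for all α > k and all i, j ≤ k. (The level surfaces of the last n−k coordinates, tangent to the image of σ, are totally geodesic submanifolds.) -/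
/-- If `σ` is a rank-`k` solution of the metrisability equations whose kernel is
spanned by `dx^{k+1}, …, dxⁿ` (with invertible upper-left `k×k` block), then
`Γ^α_{ij} = 0` for `α > k` and `i, j ≤ k`: the level surfaces of the last `n−k`
coordinates are totally geodesic. -/
theorem degenerate_solution_totally_geodesic
    (n k : ℕ) (hk : 1 ≤ k) (hkn : k < n)
    (U : Set (Fin n → ℝ)) (hU : IsOpen U)
    (Γ : Fin n → Fin n → Fin n → (Fin n → ℝ) → ℝ)
    (hΓsym : ∀ a b c x, Γ a b c x = Γ a c b x)
    (hΓC1 : ∀ a b c, ContDiffOn ℝ 1 (Γ a b c) U)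
    (σ : Fin n → Fin n → (Fin n → ℝ) → ℝ)
    (hσsym : ∀ a b x, σ a b x = σ b a x)
    (hσC1 : ∀ a b, ContDiffOn ℝ 1 (σ a b) U)
    (μ : Fin n → (Fin n → ℝ) → ℝ)
    (hmet : ∀ a b c : Fin n, ∀ x ∈ U,
      covUp Γ σ a b c x
        = (if b = a then μ c x else 0) + (if c = a then μ b x else 0))
    (hker : ∀ a b : Fin n, (k ≤ (a : ℕ) ∨ k ≤ (b : ℕ)) → ∀ x ∈ U, σ a b x = 0)
    (hblock : ∀ x ∈ U,
      (Matrix.of fun i j : Fin k =>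
        σ (Fin.castLE hkn.le i) (Fin.castLE hkn.le j) x).det ≠ 0) :
    ∀ α i j : Fin n, k ≤ (α : ℕ) → (i : ℕ) < k → (j : ℕ) < k →
      ∀ x ∈ U, Γ α i j x = 0 := by
  intro α i j hα hi hj x hx
  have hp : ∀ a b c : Fin n, k ≤ (b : ℕ) → pdv a (σ b c) x = 0 := by
    intro a b c hb
    have h : σ b c =ᶠ[nhds x] fun _ => (0 : ℝ) := by
      filter_upwards [hU.mem_nhds hx] with y hy
      exact hker b c (Or.inl hb) y hy
    simp [pdv, h.fderiv_eq]
  have h2 : ∀ c a : Fin n, ∑ d, Γ c a d x * σ α d x = 0 := fun c a =>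
    Finset.sum_eq_zero fun d _ => by rw [hker α d (Or.inl hα) x hx, mul_zero]
  have hμ : μ α x = 0 := by
    have h := hmet α α α x hx
    have h3 : ∑ d, Γ α α d x * σ d α x = 0 :=
      Finset.sum_eq_zero fun d _ => by rw [hker d α (Or.inr hα) x hx, mul_zero]
    rw [covUp, hp α α α hα, h2, h3] at h
    simp only [if_true] at h
    linarith
  have hne : α ≠ i := by
    rintro rfl
    omega
  have hs : ∀ c : Fin n, ∑ d, Γ α i d x * σ d c x = 0 := by
    intro c
    have h := hmet i α c x hx
    rw [covUp, hp i α c hα, h2, hμ, if_neg hne] at h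
    simpa using h
  have hv : (fun d : Fin k => Γ α i (Fin.castLE hkn.le d) x) = 0 := by
    apply Matrix.eq_zero_of_vecMul_eq_zero (hblock x hx)
    ext c
    have h := hs (Fin.castLE hkn.le c)
    simp only [Matrix.vecMul, dotProduct, Matrix.of_apply, Pi.zero_apply]
    rw [← h]
    refine Finset.sum_of_injOn (Fin.castLE hkn.le) (Fin.castLE_injective hkn.le).injOn
      (by simp) ?_ (fun _ _ => rfl)
    intro d _ hd
    have hd' : k ≤ (d : ℕ) := by
      by_contra hlt
      push Not at hlt
      exact hd ⟨⟨d, hlt⟩, by simp, rfl⟩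
    rw [hker d _ (Or.inl hd') x hx, mul_zero]
  exact congrFun hv ⟨j, hj⟩
end

section
/- Let Γ^a_{bc} be a torsion-free affine connection on an open set U ⊆ ℝⁿ and let σ^{ab} be a symmetric C¹ tensor field satisfying the metrisability equations ∇_a σ^{bc} = δ^b_a μ^c + δ^c_a μ^b for some vector field μ. For any two C¹ 1-forms Ω¹, Ω² on U define the vector fields V_i^a = σ^{ab} Ω^i_b (i = 1, 2). Then at every point p ∈ U the Lie bracket [V₁, V₂]^c = V₁^a ∂_a V₂^c − V₂^a ∂_a V₁^c lies in the image of the linear map σ(p); explicitly [V₁,V₂]^c = 2σ^{cb}(Ω^{[1}_b Ω^{2]}_d μ^d + σ^{ae} Ω^{[1}_e ∇_a Ω^{2]}_b), where square brackets denote antisymmetrisation (with factor ½) over the labels 1, 2. Hence the distribution defined by the image of σ is involutive. -/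
/-- The `c`-component of the Lie bracket `[V₁, V₂]` of `V_i^a = σ^{ab} Ω^i_b`. -/
noncomputable def lieBr {n : ℕ} (σ : Fin n → Fin n → (Fin n → ℝ) → ℝ)
    (Ω1 Ω2 : Fin n → (Fin n → ℝ) → ℝ) (c : Fin n) (x : Fin n → ℝ) : ℝ :=
  (∑ a, (∑ b, σ a b x * Ω1 b x) * pdv a (fun y => ∑ b, σ c b y * Ω2 b y) x)
    - ∑ a, (∑ b, σ a b x * Ω2 b x) * pdv a (fun y => ∑ b, σ c b y * Ω1 b y) x

/-- Derivative of `σ^{cb} Ω_b` rewritten through the metrisability equations. -/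
theorem pdv_image {n : ℕ} (U : Set (Fin n → ℝ)) (hU : IsOpen U)
    (Γ : Fin n → Fin n → Fin n → (Fin n → ℝ) → ℝ)
    (σ : Fin n → Fin n → (Fin n → ℝ) → ℝ)
    (hσC1 : ∀ a b, ContDiffOn ℝ 1 (σ a b) U)
    (μ : Fin n → (Fin n → ℝ) → ℝ)
    (hmet : ∀ a b c : Fin n, ∀ x ∈ U,
      covUp Γ σ a b c x
        = (if b = a then μ c x else 0) + (if c = a then μ b x else 0))
    (Ω : Fin n → (Fin n → ℝ) → ℝ)
    (hΩ : ∀ b, ContDiffOn ℝ 1 (Ω b) U) (x : Fin n → ℝ) (hx : x ∈ U) (a c : Fin n) :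
    pdv a (fun y => ∑ b, σ c b y * Ω b y) x
      = (if c = a then ∑ b, Ω b x * μ b x else 0) + μ c x * Ω a x
        - (∑ d, Γ c a d x * ∑ b, σ d b x * Ω b x)
        + ∑ b, σ c b x * covForm Γ Ω a b x := by
  have hd : ∀ f : (Fin n → ℝ) → ℝ, ContDiffOn ℝ 1 f U → DifferentiableAt ℝ f x := fun f hf =>
    (hf.differentiableOn (by norm_num)).differentiableAt (hU.mem_nhds hx)
  have h1 : pdv a (fun y => ∑ b, σ c b y * Ω b y) x
      = ∑ b, (pdv a (σ c b) x * Ω b x + σ c b x * pdv a (Ω b) x) := by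
    unfold pdv
    rw [fderiv_fun_sum (fun b _ => (hd _ (hσC1 c b)).fun_mul (hd _ (hΩ b)))]
    rw [ContinuousLinearMap.sum_apply]
    refine Finset.sum_congr rfl fun b _ => ?_
    rw [fderiv_fun_mul (hd _ (hσC1 c b)) (hd _ (hΩ b))]
    simp
    ring
  have h2 : ∀ b, pdv a (σ c b) x = (if c = a then μ b x else 0) + (if b = a then μ c x else 0)
      - (∑ d, Γ c a d x * σ d b x) - ∑ d, Γ b a d x * σ c d x := by
    intro b
    have := hmet a c b x hx
    unfold covUp at this
    linarith
  have e1 : (∑ d, Γ c a d x * ∑ b, σ d b x * Ω b x)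
      = ∑ b, (∑ d, Γ c a d x * σ d b x) * Ω b x := by
    simp only [Finset.mul_sum, Finset.sum_mul]
    rw [Finset.sum_comm]
    simp only [mul_assoc]
  have e2 : (∑ b, σ c b x * ∑ d, Γ d a b x * Ω d x)
      = ∑ b, (∑ d, Γ b a d x * σ c d x) * Ω b x := by
    simp only [Finset.mul_sum, Finset.sum_mul]
    rw [Finset.sum_comm]
    refine Finset.sum_congr rfl fun b _ => Finset.sum_congr rfl fun d _ => ?_
    ring
  have e3 : (∑ b, (if c = a then μ b x else 0) * Ω b x)
      = if c = a then ∑ b, Ω b x * μ b x else 0 := by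
    split_ifs
    · simp only [mul_comm]
    · simp
  have e4 : (∑ b, (if b = a then μ c x else 0) * Ω b x) = μ c x * Ω a x := by
    simp
  rw [h1]
  simp only [h2, covForm, mul_sub, Finset.sum_sub_distrib, add_mul, sub_mul,
    Finset.sum_add_distrib]
  rw [e1, e2, e3, e4]
  ring

/-- For a solution of the metrisability equations, the Lie bracket of two vector
fields in the image of `σ` lies in the image of `σ`, with the explicit formula
`[V₁,V₂]^c = 2σ^{cb}(Ω^{[1}_b Ω^{2]}_d μ^d + σ^{ae} Ω^{[1}_e ∇_a Ω^{2]}_b)`;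
hence the distribution defined by the image of `σ` is involutive. -/
theorem image_of_metrisability_solution_involutive
    (n : ℕ) (U : Set (Fin n → ℝ)) (hU : IsOpen U)
    (Γ : Fin n → Fin n → Fin n → (Fin n → ℝ) → ℝ)
    (hΓsym : ∀ a b c x, Γ a b c x = Γ a c b x)
    (hΓC1 : ∀ a b c, ContDiffOn ℝ 1 (Γ a b c) U)
    (σ : Fin n → Fin n → (Fin n → ℝ) → ℝ)
    (hσsym : ∀ a b x, σ a b x = σ b a x)
    (hσC1 : ∀ a b, ContDiffOn ℝ 1 (σ a b) U)
    (μ : Fin n → (Fin n → ℝ) → ℝ)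
    (hmet : ∀ a b c : Fin n, ∀ x ∈ U,
      covUp Γ σ a b c x
        = (if b = a then μ c x else 0) + (if c = a then μ b x else 0))
    (Ω1 Ω2 : Fin n → (Fin n → ℝ) → ℝ)
    (hΩ1 : ∀ b, ContDiffOn ℝ 1 (Ω1 b) U)
    (hΩ2 : ∀ b, ContDiffOn ℝ 1 (Ω2 b) U) :
    ∀ x ∈ U,
      (∀ c : Fin n,
        lieBr σ Ω1 Ω2 c x
          = 2 * ∑ b, σ c b x *
              ((1 / 2) * (Ω1 b x * (∑ d, Ω2 d x * μ d x)
                  - Ω2 b x * (∑ d, Ω1 d x * μ d x))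
                + ∑ a, ∑ e, σ a e x *
                    ((1 / 2) * (Ω1 e x * covForm Γ Ω2 a b x
                      - Ω2 e x * covForm Γ Ω1 a b x))))
      ∧ ∃ w : Fin n → ℝ, ∀ c : Fin n,
          lieBr σ Ω1 Ω2 c x = ∑ b, σ c b x * w b := by
  intro x hx
  have main : ∀ c : Fin n,
        lieBr σ Ω1 Ω2 c x
          = 2 * ∑ b, σ c b x *
              ((1 / 2) * (Ω1 b x * (∑ d, Ω2 d x * μ d x)
                  - Ω2 b x * (∑ d, Ω1 d x * μ d x))
                + ∑ a, ∑ e, σ a e x *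
                    ((1 / 2) * (Ω1 e x * covForm Γ Ω2 a b x
                      - Ω2 e x * covForm Γ Ω1 a b x))) := by
    intro c
    unfold lieBr
    simp only [pdv_image U hU Γ σ hσC1 μ hmet Ω1 hΩ1 x hx,
      pdv_image U hU Γ σ hσC1 μ hmet Ω2 hΩ2 x hx]
    -- expand one half of the bracket for arbitrary data
    have half : ∀ (v w : Fin n → ℝ) (k : ℝ) (C : Fin n → Fin n → ℝ),
        (∑ a, (∑ b, σ a b x * v b) * ((if c = a then k else 0) + μ c x * w a
          - (∑ d, Γ c a d x * ∑ b, σ d b x * w b) + ∑ b, σ c b x * C a b))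
        = (∑ b, σ c b x * (v b * k)) + μ c x * (∑ a, ∑ b, σ a b x * v b * w a)
          - (∑ a, ∑ d, Γ c a d x * (∑ b, σ a b x * v b) * (∑ b, σ d b x * w b))
          + ∑ b, σ c b x * ∑ a, ∑ e, σ a e x * (v e * C a b) := by
      intro v w k C
      simp only [mul_add, mul_sub, Finset.sum_add_distrib, Finset.sum_sub_distrib]
      congr 1
      · congr 1
        · congr 1
          · simp [Finset.sum_mul, mul_assoc]
          · rw [Finset.mul_sum]
            refine Finset.sum_congr rfl fun a _ => ?_
            rw [← Finset.sum_mul]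
            ring
        · refine Finset.sum_congr rfl fun a _ => ?_
          rw [Finset.mul_sum]
          refine Finset.sum_congr rfl fun d _ => ?_
          ring
      · have l : ∀ a, (∑ b, σ a b x * v b) * (∑ b, σ c b x * C a b)
            = ∑ b, (∑ e, σ a e x * v e) * (σ c b x * C a b) := fun a => Finset.mul_sum _ _ _
        rw [Finset.sum_congr rfl fun a _ => l a, Finset.sum_comm]
        refine Finset.sum_congr rfl fun b _ => ?_
        rw [Finset.mul_sum]
        refine Finset.sum_congr rfl fun a _ => ?_
        rw [Finset.mul_sum, Finset.sum_mul]
        refine Finset.sum_congr rfl fun e _ => ?_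
        ring
    rw [half (fun b => Ω1 b x) (fun b => Ω2 b x) _ (fun a b => covForm Γ Ω2 a b x),
      half (fun b => Ω2 b x) (fun b => Ω1 b x) _ (fun a b => covForm Γ Ω1 a b x)]
    have s1 : (∑ a, ∑ b, σ a b x * Ω1 b x * Ω2 a x)
        = ∑ a, ∑ b, σ a b x * Ω2 b x * Ω1 a x := by
      rw [Finset.sum_comm]
      refine Finset.sum_congr rfl fun a _ => Finset.sum_congr rfl fun b _ => ?_
      rw [hσsym b a]
      ring
    have s2 : (∑ a, ∑ d, Γ c a d x * (∑ b, σ a b x * Ω1 b x) * (∑ b, σ d b x * Ω2 b x))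
        = ∑ a, ∑ d, Γ c a d x * (∑ b, σ a b x * Ω2 b x) * (∑ b, σ d b x * Ω1 b x) := by
      rw [Finset.sum_comm]
      refine Finset.sum_congr rfl fun a _ => Finset.sum_congr rfl fun d _ => ?_
      rw [hΓsym c d a]
      ring
    have s3 : (2 * ∑ b, σ c b x *
              ((1 / 2) * (Ω1 b x * (∑ d, Ω2 d x * μ d x)
                  - Ω2 b x * (∑ d, Ω1 d x * μ d x))
                + ∑ a, ∑ e, σ a e x *
                    ((1 / 2) * (Ω1 e x * covForm Γ Ω2 a b x
                      - Ω2 e x * covForm Γ Ω1 a b x))))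
        = (∑ b, σ c b x * (Ω1 b x * (∑ d, Ω2 d x * μ d x)))
          - (∑ b, σ c b x * (Ω2 b x * (∑ d, Ω1 d x * μ d x)))
          + (∑ b, σ c b x * ∑ a, ∑ e, σ a e x * (Ω1 e x * covForm Γ Ω2 a b x))
          - ∑ b, σ c b x * ∑ a, ∑ e, σ a e x * (Ω2 e x * covForm Γ Ω1 a b x) := by
      rw [Finset.mul_sum, ← Finset.sum_sub_distrib, ← Finset.sum_add_distrib,
        ← Finset.sum_sub_distrib]
      refine Finset.sum_congr rfl fun b _ => ?_
      have : (∑ a, ∑ e, σ a e x * ((1 / 2) * (Ω1 e x * covForm Γ Ω2 a b x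
                      - Ω2 e x * covForm Γ Ω1 a b x)))
          = (1 / 2) * ((∑ a, ∑ e, σ a e x * (Ω1 e x * covForm Γ Ω2 a b x))
            - ∑ a, ∑ e, σ a e x * (Ω2 e x * covForm Γ Ω1 a b x)) := by
        rw [← Finset.sum_sub_distrib, Finset.mul_sum]
        refine Finset.sum_congr rfl fun a _ => ?_
        rw [← Finset.sum_sub_distrib, Finset.mul_sum]
        refine Finset.sum_congr rfl fun e _ => ?_
        ring
      rw [this]
      ring
    rw [s3]
    simp only [s1, s2]
    ring
  refine ⟨main, fun b => 2 * ((1 / 2) * (Ω1 b x * (∑ d, Ω2 d x * μ d x)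
                  - Ω2 b x * (∑ d, Ω1 d x * μ d x))
                + ∑ a, ∑ e, σ a e x *
                    ((1 / 2) * (Ω1 e x * covForm Γ Ω2 a b x
                      - Ω2 e x * covForm Γ Ω1 a b x))), fun c => ?_⟩
  rw [main c, Finset.mul_sum]
  refine Finset.sum_congr rfl fun b _ => ?_
  rw [mul_left_comm]
end

section
/- Let Γ^a_{bc} be a smooth torsion-free affine connection on a connected open set U ⊆ ℝⁿ and fix 1 ≤ k < n. Then the set of symmetric C¹ tensor fields σ^{ab} on U that satisfy the metrisability equations ∇_a σ^{bc} = δ^b_a μ^c + δ^c_a μ^b (for some vector field μ) and whose kernel contains the span of dx^{k+1}, …, dxⁿ — i.e. σ^{ab} = 0 whenever a > k or b > k — is a real vector space of dimension at most k(k+1)/2. -/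
/-- A function on a convex open set whose derivative is bounded by a multiple of the function
vanishes identically as soon as it vanishes at one point. -/
theorem aux_convex {E F : Type*} [NormedAddCommGroup E] [NormedSpace ℝ E]
    [NormedAddCommGroup F] [NormedSpace ℝ F] (B : Set E) (hB : Convex ℝ B)
    (f : E → F) (f' : E → E →L[ℝ] F) (K : ℝ)
    (hf : ∀ x ∈ B, HasFDerivAt f (f' x) x)
    (hK : ∀ x ∈ B, ‖f' x‖ ≤ K * ‖f x‖) (x y : E) (hx : x ∈ B) (hy : y ∈ B) (h0 : f x = 0) :
    f y = 0 := by
  have hmem : ∀ t ∈ Set.Icc (0 : ℝ) 1, x + t • (y - x) ∈ B := fun t ht =>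
    hB.add_smul_sub_mem hx hy ht
  have hd : ∀ t ∈ Set.Icc (0 : ℝ) 1, HasDerivAt (fun t : ℝ => f (x + t • (y - x)))
      (f' (x + t • (y - x)) (y - x)) t := by
    intro t ht
    have h1 : HasDerivAt (fun t : ℝ => x + t • (y - x)) (y - x) t := by
      simpa using ((hasDerivAt_id t).smul_const (y - x)).const_add x
    exact (hf _ (hmem t ht)).comp_hasDerivAt t h1
  have := eq_zero_of_abs_deriv_le_mul_abs_self_of_eq_zero_right
    (f := fun t : ℝ => f (x + t • (y - x)))
    (f' := fun t : ℝ => f' (x + t • (y - x)) (y - x)) (K := K * ‖y - x‖) (a := 0) (b := 1)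
    (fun t ht => (hd t ht).continuousAt.continuousWithinAt)
    (fun t ht => (hd t (Set.Ico_subset_Icc_self ht)).hasDerivWithinAt)
    (by simpa using h0)
    (fun t ht => by
      have h2 := hK _ (hmem t (Set.Ico_subset_Icc_self ht))
      calc ‖f' (x + t • (y - x)) (y - x)‖ ≤ ‖f' (x + t • (y - x))‖ * ‖y - x‖ :=
            ContinuousLinearMap.le_opNorm _ _
        _ ≤ K * ‖f (x + t • (y - x))‖ * ‖y - x‖ := by gcongr
        _ = _ := by ring)
    1 (by simp)
  simpa using this

theorem aux_conn {E F : Type*} [NormedAddCommGroup E] [NormedSpace ℝ E]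
    [NormedAddCommGroup F] [NormedSpace ℝ F] (U : Set E) (hU : IsOpen U) (hc : IsPreconnected U)
    (f : E → F) (f' : E → E →L[ℝ] F) (S : E → ℝ) (hS : ContinuousOn S U)
    (hf : ∀ x ∈ U, HasFDerivAt f (f' x) x)
    (hK : ∀ x ∈ U, ‖f' x‖ ≤ S x * ‖f x‖) (x y : E) (hx : x ∈ U) (hy : y ∈ U) (h0 : f x = 0) :
    f y = 0 := by
  refine hc.induction₂' (fun x y => f x = 0 → f y = 0) ?_ ?_ hx hy h0
  · intro z hz
    have h1 : ∀ᶠ w in nhds z, w ∈ U ∧ S w < S z + 1 :=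
      Filter.Eventually.and (hU.mem_nhds hz)
        ((hS.continuousAt (hU.mem_nhds hz)).eventually_lt_const (by linarith))
    obtain ⟨r, hr, hball⟩ := Metric.eventually_nhds_iff_ball.1 h1
    have key := aux_convex (Metric.ball z r) (convex_ball z r) f f' (S z + 1)
      (fun w hw => hf w (hball w hw).1)
      (fun w hw => (hK w (hball w hw).1).trans
        (mul_le_mul_of_nonneg_right (hball w hw).2.le (norm_nonneg _)))
    refine Filter.Eventually.filter_mono nhdsWithin_le_nhds ?_
    filter_upwards [Metric.ball_mem_nhds z hr] with w hw
    exact ⟨key z w (Metric.mem_ball_self hr) hw, key w z hw (Metric.mem_ball_self hr)⟩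
  · intro a b c _ _ _ h1 h2 h3
    exact h2 (h1 h3)

theorem aux_opNorm {n : ℕ} (L : (Fin n → ℝ) →L[ℝ] ℝ) (C : ℝ) (hC : 0 ≤ C)
    (h : ∀ a, |L (Pi.single a 1)| ≤ C) : ‖L‖ ≤ n * C := by
  refine L.opNorm_le_bound (by positivity) fun v => ?_
  have hv : L v = ∑ a, v a * L (Pi.single a 1) := by
    conv_lhs => rw [pi_eq_sum_univ' v]
    simp
  rw [hv]
  calc ‖∑ a, v a * L (Pi.single a 1)‖ ≤ ∑ a, ‖v a * L (Pi.single a 1)‖ := norm_sum_le _ _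
    _ ≤ ∑ _a : Fin n, ‖v‖ * C := by
        refine Finset.sum_le_sum fun a _ => ?_
        rw [norm_mul]
        exact mul_le_mul (norm_le_pi_norm v a) (h a) (norm_nonneg _) (norm_nonneg _)
    _ = n * C * ‖v‖ := by simp; ring

theorem aux_unique
    (n k : ℕ) (hkn : k < n)
    (U : Set (Fin n → ℝ)) (hU : IsOpen U) (hconn : IsConnected U)
    (Γ : Fin n → Fin n → Fin n → (Fin n → ℝ) → ℝ)
    (hΓ : ∀ a b c, ContinuousOn (Γ a b c) U)
    (τ : Fin n → Fin n → (Fin n → ℝ) → ℝ)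
    (hτ : ∀ a b, ∀ x ∈ U, DifferentiableAt ℝ (τ a b) x)
    (μ : Fin n → (Fin n → ℝ) → ℝ)
    (hmet : ∀ a b c : Fin n, ∀ x ∈ U,
      covUp Γ τ a b c x
        = (if b = a then μ c x else 0) + (if c = a then μ b x else 0))
    (hker : ∀ a b : Fin n, (k ≤ (a : ℕ) ∨ k ≤ (b : ℕ)) →
      ∀ x ∈ U, τ a b x = 0)
    (x₀ : Fin n → ℝ) (hx₀ : x₀ ∈ U) (h0 : ∀ a b, τ a b x₀ = 0) :
    ∀ a b : Fin n, ∀ x ∈ U, τ a b x = 0 := by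
  set α : Fin n := ⟨k, hkn⟩ with hα
  have hμ : ∀ c, ∀ x ∈ U, μ c x = ∑ d, Γ α α d x * τ d c x := by
    intro c x hx
    have h1 := hmet α α c x hx
    have hz : pdv α (τ α c) x = 0 := by
      have : τ α c =ᶠ[nhds x] fun _ => 0 := by
        filter_upwards [hU.mem_nhds hx] with y hy
        exact hker α c (Or.inl le_rfl) y hy
      unfold pdv
      rw [this.fderiv_eq]; simp
    have hz2 : ∑ d, Γ c α d x * τ α d x = 0 :=
      Finset.sum_eq_zero fun d _ => by rw [hker α d (Or.inl le_rfl) x hx, mul_zero]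
    unfold covUp at h1
    rw [hz, hz2] at h1
    by_cases hc : c = α
    · have hz3 : ∑ d, Γ α α d x * τ d c x = 0 :=
        Finset.sum_eq_zero fun d _ => by
          rw [hker d c (Or.inr (by rw [hc])) x hx, mul_zero]
      rw [hz3] at h1 ⊢
      simp [hc] at h1 ⊢
      linarith
    · simp [hc] at h1
      exact h1.symm
  let S : (Fin n → ℝ) → ℝ := fun x => ∑ a, ∑ b, ∑ c, |Γ a b c x|
  have hScont : ContinuousOn S U := by
    refine continuousOn_finsetSum _ fun a _ => continuousOn_finsetSum _ fun b _ =>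
      continuousOn_finsetSum _ fun c _ => (hΓ a b c).abs
  have hS : ∀ a b c x, |Γ a b c x| ≤ S x := by
    intro a b c x
    calc |Γ a b c x| ≤ ∑ c, |Γ a b c x| :=
          Finset.single_le_sum (f := fun c => |Γ a b c x|) (fun _ _ => abs_nonneg _)
            (Finset.mem_univ c)
      _ ≤ ∑ b, ∑ c, |Γ a b c x| :=
          Finset.single_le_sum (f := fun b => ∑ c, |Γ a b c x|)
            (fun _ _ => by positivity) (Finset.mem_univ b)
      _ ≤ S x :=
          Finset.single_le_sum (f := fun a => ∑ b, ∑ c, |Γ a b c x|)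
            (fun _ _ => by positivity) (Finset.mem_univ a)
  have hS0 : ∀ x, 0 ≤ S x := fun x => by positivity
  let f : (Fin n → ℝ) → (Fin n × Fin n → ℝ) := fun x p => τ p.1 p.2 x
  let f' : (Fin n → ℝ) → (Fin n → ℝ) →L[ℝ] (Fin n × Fin n → ℝ) := fun x =>
    ContinuousLinearMap.pi fun p => fderiv ℝ (τ p.1 p.2) x
  have hτf : ∀ a b x, |τ a b x| ≤ ‖f x‖ := fun a b x => norm_le_pi_norm (f x) (a, b)
  have hsum : ∀ (g h : Fin n → ℝ) (x : Fin n → ℝ), (∀ d, |g d| ≤ S x) → (∀ d, |h d| ≤ ‖f x‖) →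
      |∑ d, g d * h d| ≤ n * (S x * ‖f x‖) := by
    intro g h x hg hh
    calc |∑ d, g d * h d| ≤ ∑ d, |g d * h d| := Finset.abs_sum_le_sum_abs _ _
      _ ≤ ∑ _d : Fin n, S x * ‖f x‖ := by
          refine Finset.sum_le_sum fun d _ => ?_
          rw [abs_mul]
          exact mul_le_mul (hg d) (hh d) (abs_nonneg _) (hS0 x)
      _ = _ := by simp
  have hbound : ∀ a b c, ∀ x ∈ U, |pdv a (τ b c) x| ≤ 4 * (n * (S x * ‖f x‖)) := by
    intro a b c x hx
    have h1 := hmet a b c x hx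
    unfold covUp at h1
    have hC : 0 ≤ n * (S x * ‖f x‖) := by have := hS0 x; positivity
    have i1 : |∑ d, Γ b a d x * τ d c x| ≤ n * (S x * ‖f x‖) :=
      hsum _ _ x (fun d => hS _ _ _ _) (fun d => hτf _ _ _)
    have i2 : |∑ d, Γ c a d x * τ b d x| ≤ n * (S x * ‖f x‖) :=
      hsum _ _ x (fun d => hS _ _ _ _) (fun d => hτf _ _ _)
    have i3 : ∀ e, |μ e x| ≤ n * (S x * ‖f x‖) := fun e => by
      rw [hμ e x hx]
      exact hsum _ _ x (fun d => hS _ _ _ _) (fun d => hτf _ _ _)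
    have i4 : |if b = a then μ c x else 0| ≤ n * (S x * ‖f x‖) := by
      split_ifs
      · exact i3 c
      · simpa using hC
    have i5 : |if c = a then μ b x else 0| ≤ n * (S x * ‖f x‖) := by
      split_ifs
      · exact i3 b
      · simpa using hC
    rw [abs_le] at *
    constructor <;> linarith [i1.1, i1.2, i2.1, i2.2, i4.1, i4.2, i5.1, i5.2]
  have hfin : ∀ x ∈ U, f x = 0 := by
    intro x hx
    refine aux_conn U hU hconn.isPreconnected f f' (fun x => n * (4 * (n * S x))) ?_ ?_ ?_
      x₀ x hx₀ hx (funext fun p => h0 p.1 p.2)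
    · fun_prop
    · intro y hy
      exact hasFDerivAt_pi.2 fun p => (hτ p.1 p.2 y hy).hasFDerivAt
    · intro y hy
      have hSy := hS0 y
      refine ContinuousLinearMap.opNorm_le_bound _ (by positivity) fun v => ?_
      refine (pi_norm_le_iff_of_nonneg (by positivity)).2 fun p => ?_
      have h2 := aux_opNorm (fderiv ℝ (τ p.1 p.2) y) (4 * (n * (S y * ‖f y‖))) (by positivity)
        (fun a => hbound a p.1 p.2 y hy)
      calc ‖(f' y v) p‖ = ‖fderiv ℝ (τ p.1 p.2) y v‖ := rfl
        _ ≤ ‖fderiv ℝ (τ p.1 p.2) y‖ * ‖v‖ := ContinuousLinearMap.le_opNorm _ _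
        _ ≤ n * (4 * (n * (S y * ‖f y‖))) * ‖v‖ := by gcongr
        _ = _ := by ring
  intro a b x hx
  exact congrFun (hfin x hx) (a, b)

/-- The solutions of the metrisability equations whose kernel contains the span of
`dx^{k+1}, …, dxⁿ` form a vector space of dimension at most `k(k+1)/2`: any
`k(k+1)/2 + 1` such solutions are linearly dependent on `U`. -/
theorem dimension_bound_degenerate_metrisability_solutions
    (n k : ℕ) (hk : 1 ≤ k) (hkn : k < n)
    (U : Set (Fin n → ℝ)) (hU : IsOpen U) (hconn : IsConnected U)
    (Γ : Fin n → Fin n → Fin n → (Fin n → ℝ) → ℝ)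
    (hΓsym : ∀ a b c x, Γ a b c x = Γ a c b x)
    (hΓ : ∀ a b c, ContDiffOn ℝ (⊤ : ℕ∞) (Γ a b c) U)
    (σ : Fin (k * (k + 1) / 2 + 1) → Fin n → Fin n → (Fin n → ℝ) → ℝ)
    (hσsym : ∀ i a b x, σ i a b x = σ i b a x)
    (hσC1 : ∀ i a b, ContDiffOn ℝ 1 (σ i a b) U)
    (hmet : ∀ i, ∃ μ : Fin n → (Fin n → ℝ) → ℝ, ∀ a b c : Fin n, ∀ x ∈ U,
      covUp Γ (σ i) a b c x
        = (if b = a then μ c x else 0) + (if c = a then μ b x else 0))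
    (hker : ∀ i, ∀ a b : Fin n, (k ≤ (a : ℕ) ∨ k ≤ (b : ℕ)) →
      ∀ x ∈ U, σ i a b x = 0) :
    ∃ c : Fin (k * (k + 1) / 2 + 1) → ℝ, c ≠ 0 ∧
      ∀ a b : Fin n, ∀ x ∈ U, ∑ i, c i * σ i a b x = 0 := by
  obtain ⟨x₀, hx₀⟩ := hconn.nonempty
  choose μ hμ using hmet
  have hdiff : ∀ i a b, ∀ x ∈ U, DifferentiableAt ℝ (σ i a b) x := fun i a b x hx =>
    ((hσC1 i a b).differentiableOn (by simp)).differentiableAt (hU.mem_nhds hx)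
  -- linear dependence at the base point
  let e : Fin k → Fin n := Fin.castLE hkn.le
  let M : Matrix (Sym2 (Fin k)) (Fin (k * (k + 1) / 2 + 1)) ℝ := fun s i =>
    Sym2.lift ⟨fun a b => σ i (e a) (e b) x₀, fun a b => hσsym i (e a) (e b) x₀⟩ s
  have hker' : LinearMap.ker M.mulVecLin ≠ ⊥ := by
    apply LinearMap.ker_ne_bot_of_finrank_lt
    simp only [Module.finrank_fintype_fun_eq_card, Sym2.card, Fintype.card_fin]
    rw [Nat.choose_two_right, Nat.add_sub_cancel, mul_comm]
    exact Nat.lt_succ_self _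
  obtain ⟨c, hc, hc0⟩ := (Submodule.ne_bot_iff _).1 hker'
  refine ⟨c, hc0, ?_⟩
  have hM : ∀ a b : Fin k, ∑ i, c i * σ i (e a) (e b) x₀ = 0 := by
    intro a b
    have h1 : M.mulVec c = 0 := hc
    have h2 := congrFun h1 s(a, b)
    simp only [Matrix.mulVec, dotProduct, Pi.zero_apply] at h2
    rw [← h2]
    refine Finset.sum_congr rfl fun i _ => ?_
    rw [mul_comm]; rfl
  refine aux_unique n k hkn U hU hconn Γ (fun a b c => (hΓ a b c).continuousOn)
    (fun a b x => ∑ i, c i * σ i a b x) ?_ (fun a x => ∑ i, c i * μ i a x) ?_ ?_ x₀ hx₀ ?_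
  · intro a b x hx
    exact DifferentiableAt.fun_sum fun i _ => (hdiff i a b x hx).const_mul _
  · intro a b d x hx
    have hp : pdv a (fun x => ∑ i, c i * σ i b d x) x = ∑ i, c i * pdv a (σ i b d) x := by
      unfold pdv
      rw [fderiv_fun_sum fun i _ => (hdiff i b d x hx).const_mul _]
      rw [sum_apply]
      refine Finset.sum_congr rfl fun i _ => ?_
      rw [fderiv_const_mul (hdiff i b d x hx)]
      simp
    have hl : covUp Γ (fun a b x => ∑ i, c i * σ i a b x) a b d x
        = ∑ i, c i * covUp Γ (σ i) a b d x := by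
      unfold covUp
      rw [hp]
      simp only [mul_add, Finset.sum_add_distrib, Finset.mul_sum]
      congr 1
      · congr 1
        rw [Finset.sum_comm]
        exact Finset.sum_congr rfl fun _ _ => Finset.sum_congr rfl fun _ _ => by ring
      · rw [Finset.sum_comm]
        exact Finset.sum_congr rfl fun _ _ => Finset.sum_congr rfl fun _ _ => by ring
    rw [hl]
    simp only [hμ _ _ _ _ x hx, mul_add, Finset.sum_add_distrib]
    congr 1 <;> split_ifs <;> simp
  · intro a b hab x hx
    exact Finset.sum_eq_zero fun i _ => by rw [hker i a b hab x hx, mul_zero]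
  · intro a b
    by_cases hab : k ≤ (a : ℕ) ∨ k ≤ (b : ℕ)
    · exact Finset.sum_eq_zero fun i _ => by rw [hker i a b hab x₀ hx₀, mul_zero]
    · push Not at hab
      exact hM ⟨a, hab.1⟩ ⟨b, hab.2⟩
end

section
/- Let n ≥ 3 and let Γ be the torsion-free affine connection on ℝⁿ (coordinates x¹, …, xⁿ) whose only nonzero components are Γ¹_{nn} = −x²/2 and Γ²_{nn} = −x¹/2 (the Newtonian connection of the potential V = x¹x²). Then a symmetric C¹ tensor field σ^{ab} on ℝⁿ satisfies the metrisability equations ∇_a σ^{bc} = δ^b_a μ^c + δ^c_a μ^b for some vector field μ if and only if σ^{an} = 0 for all a and all components σ^{kl} with k, l ≤ n − 1 are constant. In particular the solution space of the metrisability equations of this connection has dimension exactly n(n−1)/2, and every solution is degenerate. -/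
/-- The Newtonian connection on `ℝⁿ` (`n = m + 3`) of the potential `V = x¹x²`:
the only nonzero components are `Γ¹_{nn} = −x²/2` and `Γ²_{nn} = −x¹/2`. -/
noncomputable def newtonGamma (m : ℕ) :
    Fin (m + 3) → Fin (m + 3) → Fin (m + 3) → (Fin (m + 3) → ℝ) → ℝ :=
  fun a b c x =>
    if a = 0 ∧ b = Fin.last (m + 2) ∧ c = Fin.last (m + 2) then -(x 1) / 2
    else if a = 1 ∧ b = Fin.last (m + 2) ∧ c = Fin.last (m + 2) then -(x 0) / 2
    else 0

/-- The metrisability equations for the Newtonian connection. -/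
def NewtonMet (m : ℕ) (σ : Fin (m + 3) → Fin (m + 3) → (Fin (m + 3) → ℝ) → ℝ) : Prop :=
  ∃ μ : Fin (m + 3) → (Fin (m + 3) → ℝ) → ℝ, ∀ (a b c : Fin (m + 3)) (x : Fin (m + 3) → ℝ),
    covUp (newtonGamma m) σ a b c x
      = (if b = a then μ c x else 0) + (if c = a then μ b x else 0)

/-- A symmetric `C¹` solution of the metrisability equations of the Newtonian
connection. -/
def NewtonSol (m : ℕ) (σ : Fin (m + 3) → Fin (m + 3) → (Fin (m + 3) → ℝ) → ℝ) : Prop :=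
  (∀ a b x, σ a b x = σ b a x) ∧ (∀ a b, ContDiff ℝ 1 (σ a b)) ∧ NewtonMet m σ

theorem nm_line {n : ℕ} {k : Fin n} {f : (Fin n → ℝ) → ℝ} (hf : ContDiff ℝ 1 f)
    (h : ∀ x, pdv k f x = 0) (x : Fin n → ℝ) :
    f (x + Pi.single k 1) = f x := by
  have hd : Differentiable ℝ f := hf.differentiable (by norm_num)
  have key : ∀ t : ℝ, HasDerivAt (fun t : ℝ => f (x + t • (Pi.single k 1 : Fin n → ℝ))) 0 t := by
    intro t
    have h1 : HasDerivAt (fun t : ℝ => x + t • (Pi.single k 1 : Fin n → ℝ))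
        (Pi.single k 1) t := by
      simpa using ((hasDerivAt_id t).smul_const (Pi.single k 1 : Fin n → ℝ)).const_add x
    have h2 := (hd (x + t • (Pi.single k 1 : Fin n → ℝ))).hasFDerivAt.comp_hasDerivAt t h1
    have h3 := h (x + t • (Pi.single k 1 : Fin n → ℝ))
    unfold pdv at h3
    rw [h3] at h2
    exact h2
  have := is_const_of_deriv_eq_zero (fun t => (key t).differentiableAt)
    (fun t => (key t).deriv) 1 0
  simpa using this

theorem nm_pdv {n : ℕ} {k : Fin n} {f : (Fin n → ℝ) → ℝ} (hf : ContDiff ℝ 1 f)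
    (h : ∀ x, pdv k f x = 0) (a : Fin n) (x : Fin n → ℝ) :
    pdv a f (x + Pi.single k 1) = pdv a f x := by
  unfold pdv
  rw [← fderiv_comp_add_right (f := f) (Pi.single k 1)]
  congr 2
  funext y
  exact nm_line hf h y

theorem nm_const {n : ℕ} {f : (Fin n → ℝ) → ℝ} (hf : ContDiff ℝ 1 f)
    (h : ∀ a x, pdv a f x = 0) (x y : Fin n → ℝ) : f x = f y := by
  refine is_const_of_fderiv_eq_zero (𝕜 := ℝ) (hf.differentiable (by norm_num)) ?_ x y
  intro z
  apply ContinuousLinearMap.coe_injective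
  refine (Pi.basisFun ℝ (Fin n)).ext fun a => ?_
  simpa [pdv] using h a z

theorem nm_pdv_const {n : ℕ} {f : (Fin n → ℝ) → ℝ} (h : ∀ x y, f x = f y) (a : Fin n)
    (x : Fin n → ℝ) : pdv a f x = 0 := by
  have : f = fun _ => f 0 := by
    funext y
    exact h y 0
  unfold pdv
  rw [this]
  simp

/-- the nonzero part of the connection -/
noncomputable def nmG (m : ℕ) (a : Fin (m + 3)) (x : Fin (m + 3) → ℝ) : ℝ :=
  if a = 0 then -(x 1) / 2 else if a = 1 then -(x 0) / 2 else 0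

theorem nm_gamma (m : ℕ) (a b c : Fin (m + 3)) (x : Fin (m + 3) → ℝ) :
    newtonGamma m a b c x =
      if b = Fin.last (m + 2) then (if c = Fin.last (m + 2) then nmG m a x else 0) else 0 := by
  unfold newtonGamma nmG
  split_ifs <;> simp_all

theorem nm_cov (m : ℕ) (σ : Fin (m + 3) → Fin (m + 3) → (Fin (m + 3) → ℝ) → ℝ)
    (a b c : Fin (m + 3)) (x : Fin (m + 3) → ℝ) :
    covUp (newtonGamma m) σ a b c x = pdv a (σ b c) x +
      (if a = Fin.last (m + 2) then
        nmG m b x * σ (Fin.last (m + 2)) c x + nmG m c x * σ b (Fin.last (m + 2)) x else 0) := by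
  unfold covUp
  simp only [nm_gamma]
  by_cases h : a = Fin.last (m + 2) <;> simp [h, add_assoc]

theorem nm_fwd (m : ℕ) (σ : Fin (m + 3) → Fin (m + 3) → (Fin (m + 3) → ℝ) → ℝ)
    (hs : ∀ a b x, σ a b x = σ b a x) (hc : ∀ a b, ContDiff ℝ 1 (σ a b))
    (h : NewtonMet m σ) :
    ((∀ (a : Fin (m + 3)) (x : Fin (m + 3) → ℝ), σ a (Fin.last (m + 2)) x = 0)
          ∧ (∀ k l : Fin (m + 3), k ≠ Fin.last (m + 2) → l ≠ Fin.last (m + 2) →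
              ∀ x y : Fin (m + 3) → ℝ, σ k l x = σ k l y)) := by
  obtain ⟨μ, hμ⟩ := h
  simp only [nm_cov] at hμ
  have n0 : (0 : Fin (m + 3)) ≠ Fin.last (m + 2) := by
    simp [Fin.ext_iff]
  have n1 : (1 : Fin (m + 3)) ≠ Fin.last (m + 2) := by
    simp [Fin.ext_iff]
  have n01 : (0 : Fin (m + 3)) ≠ 1 := by
    simp [Fin.ext_iff]
  set N := Fin.last (m + 2) with hN
  have g0 : ∀ x, nmG m 0 x = -(x 1) / 2 := fun x => by simp [nmG]
  have g1 : ∀ x, nmG m 1 x = -(x 0) / 2 := fun x => by simp [nmG]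
  have gN : ∀ x, nmG m N x = 0 := fun x => by simp [nmG, n0.symm, n1.symm]
  have e1 : ∀ k, k ≠ N → ∀ b c, b ≠ k → c ≠ k → ∀ x, pdv k (σ b c) x = 0 := by
    intro k hk b c hb hcc x
    simpa [hk, hb, hcc] using hμ k b c x
  -- the component NN vanishes
  have hNN : ∀ x, σ N N x = 0 := by
    intro x
    set y := x + Pi.single (1 : Fin (m + 3)) (1 : ℝ) with hy
    have a1 : ∀ z, pdv 0 (σ 0 0) z = μ 0 z + μ 0 z := fun z => by
      simpa [n0] using hμ 0 0 0 z
    have a2 : ∀ z, pdv N (σ 0 N) z + nmG m 0 z * σ N N z = μ 0 z := fun z => by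
      simpa [n0, gN] using hμ N 0 N z
    have b1 : pdv 0 (σ 0 0) y = pdv 0 (σ 0 0) x :=
      nm_pdv (hc 0 0) (e1 1 n1 0 0 n01 n01) 0 x
    have b2 : pdv N (σ 0 N) y = pdv N (σ 0 N) x :=
      nm_pdv (hc 0 N) (e1 1 n1 0 N n01 n1.symm) N x
    have b3 : σ N N y = σ N N x := nm_line (hc N N) (e1 1 n1 N N n1.symm n1.symm) x
    have y1 : y 1 = x 1 + 1 := by simp [hy]
    have c1 := a1 x
    have c2 := a1 y
    have c3 := a2 x
    have c4 := a2 y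
    rw [g0] at c3 c4
    rw [b2, b3, y1] at c4
    rw [b1] at c2
    linarith
  have hμN : ∀ x, μ N x = 0 := by
    intro x
    have h1 := hμ N N N x
    rw [nm_pdv_const (fun x y => by rw [hNN, hNN])] at h1
    simp [gN] at h1
    linarith
  have e2 : ∀ k, k ≠ N → ∀ j, j ≠ N → ∀ x, pdv k (σ j N) x = 0 := by
    intro k hk j hj x
    have := hμ k j N x
    simpa [hk, hk.symm, hμN] using this
  -- the mixed equation
  have e6 : ∀ i j, i ≠ N → j ≠ N → ∀ x,
      pdv N (σ i j) x + (nmG m i x * σ j N x + nmG m j x * σ i N x) = 0 := by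
    intro i j hi hj x
    have := hμ N i j x
    rw [hs N j] at this
    simpa [hi, hj] using this
  have hz0 : ∀ x, σ 0 N x = 0 := by
    intro x
    set y := x + Pi.single (1 : Fin (m + 3)) (1 : ℝ) with hy
    have b1 : pdv N (σ 0 0) y = pdv N (σ 0 0) x :=
      nm_pdv (hc 0 0) (e1 1 n1 0 0 n01 n01) N x
    have b2 : σ 0 N y = σ 0 N x := nm_line (hc 0 N) (e2 1 n1 0 n0) x
    have y1 : y 1 = x 1 + 1 := by simp [hy]
    have c1 := e6 0 0 n0 n0 x
    have c2 := e6 0 0 n0 n0 y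
    rw [g0] at c1 c2
    rw [b1, b2, y1] at c2
    linarith
  have hz1 : ∀ x, σ 1 N x = 0 := by
    intro x
    set y := x + Pi.single (0 : Fin (m + 3)) (1 : ℝ) with hy
    have b1 : pdv N (σ 1 1) y = pdv N (σ 1 1) x :=
      nm_pdv (hc 1 1) (e1 0 n0 1 1 n01.symm n01.symm) N x
    have b2 : σ 1 N y = σ 1 N x := nm_line (hc 1 N) (e2 0 n0 1 n1) x
    have y1 : y 0 = x 0 + 1 := by simp [hy]
    have c1 := e6 1 1 n1 n1 x
    have c2 := e6 1 1 n1 n1 y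
    rw [g1] at c1 c2
    rw [b1, b2, y1] at c2
    linarith
  have hz : ∀ a x, σ a N x = 0 := by
    intro a x
    by_cases haN : a = N
    · rw [haN, hNN]
    by_cases ha1 : a = 1
    · rw [ha1, hz1]
    set y := x + Pi.single (1 : Fin (m + 3)) (1 : ℝ) with hy
    have b1 : pdv N (σ 0 a) y = pdv N (σ 0 a) x :=
      nm_pdv (hc 0 a) (e1 1 n1 0 a n01 ha1) N x
    have b2 : σ a N y = σ a N x := nm_line (hc a N) (e2 1 n1 a haN) x
    have y1 : y 1 = x 1 + 1 := by simp [hy]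
    have c1 := e6 0 a n0 haN x
    have c2 := e6 0 a n0 haN y
    rw [g0, hz0] at c1 c2
    rw [b1, b2, y1] at c2
    linarith
  refine ⟨hz, ?_⟩
  have hμ0 : ∀ i x, μ i x = 0 := by
    intro i x
    by_cases hi : i = N
    · rw [hi, hμN]
    have h1 := hμ N i N x
    rw [nm_pdv_const (fun x y => by rw [hz, hz])] at h1
    simp [gN, hi, hNN] at h1
    exact h1.symm
  intro k l hk hl
  refine nm_const (hc k l) ?_
  intro a x
  have h1 := hμ a k l x
  rw [hs N l, hz, hz] at h1
  simpa [hμ0] using h1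

theorem nm_bwd (m : ℕ) (σ : Fin (m + 3) → Fin (m + 3) → (Fin (m + 3) → ℝ) → ℝ)
    (hs : ∀ a b x, σ a b x = σ b a x)
    (hz : ∀ (a : Fin (m + 3)) (x : Fin (m + 3) → ℝ), σ a (Fin.last (m + 2)) x = 0)
    (hk : ∀ k l : Fin (m + 3), k ≠ Fin.last (m + 2) → l ≠ Fin.last (m + 2) →
              ∀ x y : Fin (m + 3) → ℝ, σ k l x = σ k l y) : NewtonMet m σ := by
  refine ⟨fun _ _ => 0, ?_⟩
  intro a b c x
  rw [nm_cov, hs (Fin.last (m + 2)) c, hz, hz, nm_pdv_const]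
  · simp
  intro x y
  by_cases hb : b = Fin.last (m + 2)
  · subst hb
    rw [hs, hz, hs, hz]
  by_cases hcc : c = Fin.last (m + 2)
  · subst hcc
    rw [hz, hz]
  exact hk b c hb hcc x y

theorem nm_card (m : ℕ) : Fintype.card (Sym2 (Fin (m + 2))) = (m + 3) * (m + 2) / 2 := by
  rw [Sym2.card, Fintype.card_fin, Nat.choose_two_right]
  rfl

/-- For the Newtonian connection of the potential `V = x¹x²` on `ℝⁿ`, `n = m + 3 ≥ 3`:
a symmetric `C¹` tensor `σ` solves the metrisability equations iff `σ^{an} = 0` and all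
components `σ^{kl}` with `k, l ≤ n − 1` are constant; in particular the solution space
has dimension exactly `n(n−1)/2` and every solution is degenerate. -/
theorem newtonian_metrisability (m : ℕ) :
    (∀ σ : Fin (m + 3) → Fin (m + 3) → (Fin (m + 3) → ℝ) → ℝ,
      (∀ a b x, σ a b x = σ b a x) → (∀ a b, ContDiff ℝ 1 (σ a b)) →
      (NewtonMet m σ ↔
        ((∀ (a : Fin (m + 3)) (x : Fin (m + 3) → ℝ), σ a (Fin.last (m + 2)) x = 0)
          ∧ (∀ k l : Fin (m + 3), k ≠ Fin.last (m + 2) → l ≠ Fin.last (m + 2) →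
              ∀ x y : Fin (m + 3) → ℝ, σ k l x = σ k l y))))
    ∧ (∀ σ : Fin (m + 3) → Fin (m + 3) → (Fin (m + 3) → ℝ) → ℝ, NewtonSol m σ →
        ∀ x : Fin (m + 3) → ℝ, (Matrix.of fun a b => σ a b x).det = 0)
    ∧ (∀ σs : Fin ((m + 3) * (m + 2) / 2 + 1) →
          Fin (m + 3) → Fin (m + 3) → (Fin (m + 3) → ℝ) → ℝ,
        (∀ i, NewtonSol m (σs i)) →
        ∃ c : Fin ((m + 3) * (m + 2) / 2 + 1) → ℝ, c ≠ 0 ∧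
          ∀ (a b : Fin (m + 3)) (x : Fin (m + 3) → ℝ), ∑ i, c i * σs i a b x = 0)
    ∧ (∃ σs : Fin ((m + 3) * (m + 2) / 2) →
          Fin (m + 3) → Fin (m + 3) → (Fin (m + 3) → ℝ) → ℝ,
        (∀ i, NewtonSol m (σs i)) ∧
        ∀ c : Fin ((m + 3) * (m + 2) / 2) → ℝ,
          (∀ (a b : Fin (m + 3)) (x : Fin (m + 3) → ℝ), ∑ i, c i * σs i a b x = 0)
          → c = 0) := by
  have hfwd := nm_fwd m
  refine ⟨fun σ hs hc => ⟨hfwd σ hs hc, fun h => nm_bwd m σ hs h.1 h.2⟩, ?_, ?_, ?_⟩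
  · intro σ h x
    exact Matrix.det_eq_zero_of_column_eq_zero (Fin.last (m + 2))
      (fun a => (hfwd σ h.1 h.2.1 h.2.2).1 a x)
  · intro σs hσ
    let L : (Fin ((m + 3) * (m + 2) / 2 + 1) → ℝ) →ₗ[ℝ] (Sym2 (Fin (m + 2)) → ℝ) :=
      { toFun := fun c z => ∑ i, c i * σs i z.out.1.castSucc z.out.2.castSucc 0
        map_add' := by
          intro c d
          funext z
          simp [add_mul, Finset.sum_add_distrib]
        map_smul' := by
          intro r c
          funext z
          simp [Finset.mul_sum, mul_assoc] }
    have hL : LinearMap.ker L ≠ ⊥ := by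
      apply LinearMap.ker_ne_bot_of_finrank_lt
      rw [Module.finrank_fintype_fun_eq_card, Module.finrank_fintype_fun_eq_card, nm_card,
        Fintype.card_fin]
      exact Nat.lt_succ_self _
    obtain ⟨c, hcL, hc0⟩ := (Submodule.ne_bot_iff _).1 hL
    refine ⟨c, hc0, ?_⟩
    intro a b x
    have hsol := fun i => hfwd (σs i) (hσ i).1 (hσ i).2.1 (hσ i).2.2
    induction b using Fin.lastCases with
    | last => simp [(hsol _).1]
    | cast b =>
      induction a using Fin.lastCases with
      | last =>
        refine Finset.sum_eq_zero fun i _ => ?_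
        rw [(hσ i).1, (hsol i).1, mul_zero]
      | cast a =>
        have h1 : ∑ i, c i * σs i (s(a, b)).out.1.castSucc (s(a, b)).out.2.castSucc 0 = 0 :=
          congrFun (LinearMap.mem_ker.1 hcL) s(a, b)
        rw [← h1]
        refine Finset.sum_congr rfl fun i _ => ?_
        congr 1
        have h2 : s((s(a, b)).out.1, (s(a, b)).out.2) = s(a, b) := Quot.out_eq _
        rw [(hsol i).2 a.castSucc b.castSucc (Fin.castSucc_ne_last a) (Fin.castSucc_ne_last b) x 0]
        rcases Sym2.eq_iff.1 h2 with ⟨p, q⟩ | ⟨p, q⟩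
        · rw [p, q]
        · rw [p, q, (hσ i).1]
  · let e : Fin ((m + 3) * (m + 2) / 2) ≃ Sym2 (Fin (m + 2)) :=
      (Fintype.equivFinOfCardEq (nm_card m)).symm
    refine ⟨fun i a b _ => if (e i).map Fin.castSucc = s(a, b) then 1 else 0, ?_, ?_⟩
    · intro i
      have hs : ∀ (a b : Fin (m + 3)) (x : Fin (m + 3) → ℝ),
          (if (e i).map Fin.castSucc = s(a, b) then (1 : ℝ) else 0)
            = if (e i).map Fin.castSucc = s(b, a) then (1 : ℝ) else 0 := by
        intro a b x
        rw [Sym2.eq_swap]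
      refine ⟨hs, fun a b => contDiff_const, nm_bwd m _ hs ?_ (fun _ _ _ _ _ _ => rfl)⟩
      intro a x
      refine if_neg fun h => ?_
      have h3 : Fin.last (m + 2) ∈ (e i).map Fin.castSucc := by
        rw [h]
        exact Sym2.mem_mk_right _ _
      obtain ⟨w, _, hw⟩ := Sym2.mem_map.1 h3
      exact Fin.castSucc_ne_last w hw
    · intro c h
      funext i
      obtain ⟨⟨a, b⟩, hab⟩ := Quot.exists_rep (e i)
      have hab' : e i = s(a, b) := hab.symm
      have h1 := h a.castSucc b.castSucc 0
      have h2 : ∀ j, ((e j).map Fin.castSucc = s(a.castSucc, b.castSucc)) ↔ j = i := by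
        intro j
        rw [← Sym2.map_mk, ← hab']
        exact ((Sym2.map.injective (Fin.castSucc_injective _)).comp e.injective).eq_iff
      simpa [h2] using h1
end
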